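/- Let U : ℝ² → ℝ be a smooth, nowhere-vanishing function of (z,τ) satisfying the RmKdV equation U_τ + (U³(U_zz − U))_z = 0, let Λ ∈ ℝ, and let (Ψ₁,Ψ₂) be smooth real functions on ℝ² satisfying the RmKdV Lax pair Ψ_z = B·Ψ, Ψ_τ = Λ·C·Ψ with B = [[−1, Λ/U],[Λ/U, 1]] and C = [[4ΛU, U·U_zz + U_z² − 2U·U_z − 4Λ²],[U·U_zz + U_z² + 2U·U_z − 4Λ², −4ΛU]]. Fix i ∈ {1,2} and set k = −1 if i = 1 and k = +1 if i = 2; suppose U + k·U_z is nowhere vanishing. Let y : ℝ² → ℝ be smooth with y_z = U + k·U_z and y_τ = (U⁴ − U³·U_zz) + k·(U⁴ − U³·U_zz)_z, let M be a smooth function of (y,T) with M(y(z,τ), τ) = U·(U + k·U_z)(z,τ), and let Φ be a smooth function of (y,T) with Φ(y(z,τ), τ) = Ψ_i(z,τ) for all (z,τ). Then, with λ = −Λ², at every point of the form (y(z,τ), τ) the function Φ satisfies the scalar RKdV Lax pair: Φ_yy = −(M_y/M)Φ_y + ((M − λ)/M²)Φ and Φ_T = (M²·M_yy + M·M_y² −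 M² + 4λM)Φ_y − M·M_y·Φ. -/

import Mathlib

noncomputable section

/-- Partial derivative of `f` with respect to its first argument. -/
def d1 (f : ℝ → ℝ → ℝ) : ℝ → ℝ → ℝ := fun a b => deriv (fun a' => f a' b) a

/-- Partial derivative of `f` with respect to its second argument. -/
def d2 (f : ℝ → ℝ → ℝ) : ℝ → ℝ → ℝ := fun a b => deriv (fun b' => f a b') b

/-- Smoothness of a two-variable real function. -/
def Smooth2 (f : ℝ → ℝ → ℝ) : Prop := ContDiff ℝ (⊤ : ℕ∞) (fun p : ℝ × ℝ => f p.1 p.2)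

/-!
Since `M = U (U + k U_z)` and `y_z = U + k U_z`, the vector fields `M ∂_y` and `U ∂_z` correspond
under the change of variable `z ↦ y(z, τ)`; call both of them `D`. Multiplied by `M²`, the spatial
RKdV equation reads `D²Φ = (M - λ) Φ`, and the coefficient of `Φ_y` in the time equation is
`D²M - M² + 4λM`. On the RmKdV side, eliminating the other component from `Ψ_z = B Ψ` gives
`D²Ψᵢ = (M + Λ²) Ψᵢ`, eliminating it from `Ψ_τ = Λ C Ψ` gives
`(Ψᵢ)_τ = (k M_z - 4Λ²) DΨᵢ - (DM) Ψᵢ`, and the reciprocal transformation satisfies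
`y_τ = k M M_z + M² - D²M`. The time equation is then the chain rule
`(Ψᵢ)_τ = y_τ Φ_y + Φ_T`, because `DΨᵢ = M Φ_y`.
-/

section ScaledDeriv

variable {𝕜 : Type*} [NontriviallyNormedField 𝕜]

/-- The derivation `m ∂ₓ`, for functions of one variable; used with `m` the RKdV field `M(·, τ)` and
with `m` the RmKdV field `U(·, τ)`. -/
def scaledDeriv (m f : 𝕜 → 𝕜) : 𝕜 → 𝕜 := fun x => m x * deriv f x

theorem scaledDeriv_comp {m u f Y : 𝕜 → 𝕜} (hf : Differentiable 𝕜 f) (hY : Differentiable 𝕜 Y)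
    (hm : ∀ x, m (Y x) = u x * deriv Y x) :
    scaledDeriv m f ∘ Y = scaledDeriv u (f ∘ Y) := by
  funext x
  simp only [scaledDeriv, Function.comp_apply, hm, deriv_comp x (hf (Y x)) (hY x)]
  ring

theorem scaledDeriv_scaledDeriv_comp {m u f Y : 𝕜 → 𝕜} (hm : Differentiable 𝕜 m)
    (hf : Differentiable 𝕜 f) (hf' : Differentiable 𝕜 (deriv f)) (hY : Differentiable 𝕜 Y)
    (hmY : ∀ x, m (Y x) = u x * deriv Y x) :
    scaledDeriv m (scaledDeriv m f) ∘ Y = scaledDeriv u (scaledDeriv u (f ∘ Y)) := by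
  have hDf : Differentiable 𝕜 (scaledDeriv m f) := hm.mul hf'
  rw [scaledDeriv_comp hDf hY hmY, scaledDeriv_comp hf hY hmY]

theorem scaledDeriv_scaledDeriv {m f : 𝕜 → 𝕜} {x : 𝕜} (hm : DifferentiableAt 𝕜 m x)
    (hf' : DifferentiableAt 𝕜 (deriv f) x) :
    scaledDeriv m (scaledDeriv m f) x
      = m x ^ 2 * deriv (deriv f) x + m x * deriv m x * deriv f x := by
  have h : deriv (scaledDeriv m f) x = deriv m x * deriv f x + m x * deriv (deriv f) x :=
    (hm.hasDerivAt.mul hf'.hasDerivAt).deriv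
  rw [scaledDeriv, h]
  ring

theorem deriv_deriv_eq_of_scaledDeriv_scaledDeriv_eq {m f : 𝕜 → 𝕜} {x q : 𝕜}
    (hm : DifferentiableAt 𝕜 m x) (hf' : DifferentiableAt 𝕜 (deriv f) x) (hmx : m x ≠ 0)
    (h : scaledDeriv m (scaledDeriv m f) x = q * f x) :
    deriv (deriv f) x = -(deriv m x / m x) * deriv f x + q / m x ^ 2 * f x := by
  rw [scaledDeriv_scaledDeriv hm hf'] at h
  field_simp
  linear_combination h

end ScaledDeriv

section Miura

variable {𝕜 : Type*} [NontriviallyNormedField 𝕜]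

/-- The Miura transform `u (u + k u')` of `u`: the RKdV field `M`, written in the variable `z`. -/
def miura (k : 𝕜) (u : 𝕜 → 𝕜) : 𝕜 → 𝕜 := fun x => u x * (u x + k * deriv u x)

variable {k Λ x : 𝕜} {u ψ χ : 𝕜 → 𝕜}

theorem deriv_miura (hu : DifferentiableAt 𝕜 u x) (hu' : DifferentiableAt 𝕜 (deriv u) x) :
    deriv (miura k u) x
      = 2 * u x * deriv u x + k * (deriv u x ^ 2 + u x * deriv (deriv u) x) := by
  have h := hu.hasDerivAt.mul (hu.hasDerivAt.add (hu'.hasDerivAt.const_mul k))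
  refine h.deriv.trans ?_
  simp only [Pi.add_apply]
  ring

theorem hasDerivAt_deriv_miura (hu : Differentiable 𝕜 u) (hu' : Differentiable 𝕜 (deriv u))
    (hu'' : DifferentiableAt 𝕜 (deriv (deriv u)) x) :
    HasDerivAt (deriv (miura k u)) (2 * (deriv u x ^ 2 + u x * deriv (deriv u) x)
      + k * (3 * deriv u x * deriv (deriv u) x + u x * deriv (deriv (deriv u)) x)) x := by
  have h₀ := (hu x).hasDerivAt
  have h₁ := (hu' x).hasDerivAt
  rw [funext (f := deriv (miura k u)) fun x => deriv_miura (hu x) (hu' x)]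
  refine (((h₀.const_mul 2).mul h₁).add
    (((h₁.pow 2).add (h₀.mul hu''.hasDerivAt)).const_mul k)).congr_deriv ?_
  push_cast
  ring

theorem reciprocal_flux_eq (hk : k ^ 2 = 1) (hu : Differentiable 𝕜 u)
    (hu' : Differentiable 𝕜 (deriv u)) (hu'' : DifferentiableAt 𝕜 (deriv (deriv u)) x) :
    (u x ^ 4 - u x ^ 3 * deriv (deriv u) x)
        + k * deriv (fun x => u x ^ 4 - u x ^ 3 * deriv (deriv u) x) x
      = k * miura k u x * deriv (miura k u) x + miura k u x ^ 2
        - scaledDeriv u (scaledDeriv u (miura k u)) x := by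
  have hflux : deriv (fun x => u x ^ 4 - u x ^ 3 * deriv (deriv u) x) x
      = 4 * u x ^ 3 * deriv u x - (3 * u x ^ 2 * deriv u x * deriv (deriv u) x
        + u x ^ 3 * deriv (deriv (deriv u)) x) := by
    have h₀ := (hu x).hasDerivAt
    refine ((h₀.pow 4).sub ((h₀.pow 3).mul hu''.hasDerivAt)).deriv.trans ?_
    norm_num
  have hM' := hasDerivAt_deriv_miura (k := k) hu hu' hu''
  rw [hflux, scaledDeriv_scaledDeriv (hu x) hM'.differentiableAt, hM'.deriv,
    deriv_miura (hu x) (hu' x), miura]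
  linear_combination
    -u x * (u x * (4 * deriv u x ^ 2 + u x * deriv (deriv u) x)
      + k * deriv u x * (deriv u x ^ 2 + u x * deriv (deriv u) x)) * hk

theorem scaledDeriv_scaledDeriv_of_rmkdv_lax (hk : k ^ 2 = 1) (hu₀ : ∀ x, u x ≠ 0)
    (hu : DifferentiableAt 𝕜 u x) (hψ : DifferentiableAt 𝕜 ψ x) (hχ : DifferentiableAt 𝕜 χ x)
    (hψx : ∀ x, deriv ψ x = k * ψ x + Λ / u x * χ x)
    (hχx : deriv χ x = Λ / u x * ψ x - k * χ x) :
    scaledDeriv u (scaledDeriv u ψ) x = (miura k u x + Λ ^ 2) * ψ x := by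
  have hDψ : scaledDeriv u ψ = fun x => k * (u x * ψ x) + Λ * χ x := by
    funext x
    have hux : u x ≠ 0 := hu₀ x
    rw [scaledDeriv, hψx]
    field_simp
  have hderiv : deriv (scaledDeriv u ψ) x
      = k * (deriv u x * ψ x + u x * deriv ψ x) + Λ * deriv χ x := by
    rw [hDψ]
    exact (((hu.hasDerivAt.mul hψ.hasDerivAt).const_mul k).add (hχ.hasDerivAt.const_mul Λ)).deriv
  have hux : u x ≠ 0 := hu₀ x
  rw [scaledDeriv, hderiv, hψx, hχx, miura]
  field_simp
  linear_combination (u x ^ 2 * ψ x) * hk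

theorem rmkdv_lax_time_eq_scaledDeriv (hk : k ^ 2 = 1) (hu₀ : u x ≠ 0)
    (hu : DifferentiableAt 𝕜 u x) (hu' : DifferentiableAt 𝕜 (deriv u) x)
    (hψx : deriv ψ x = k * ψ x + Λ / u x * χ x) :
    Λ * (-4 * k * Λ * u x * ψ x
        + (u x * deriv (deriv u) x + deriv u x ^ 2 + 2 * k * u x * deriv u x - 4 * Λ ^ 2) * χ x)
      = (k * deriv (miura k u) x - 4 * Λ ^ 2) * scaledDeriv u ψ x
        - scaledDeriv u (miura k u) x * ψ x := by
  simp only [scaledDeriv, deriv_miura hu hu', hψx]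
  field_simp
  linear_combination
    -(2 * u x ^ 2 * ψ x * deriv u x
      + (deriv u x ^ 2 + u x * deriv (deriv u) x) * (Λ * χ x + k * u x * ψ x)) * hk

end Miura

section LaxPair

variable {𝕜 : Type*} [NontriviallyNormedField 𝕜] {k Λ x : 𝕜} {u ψ χ m f Y : 𝕜 → 𝕜}

theorem rkdv_lax_space_of_rmkdv_lax (hk : k ^ 2 = 1) (hu₀ : ∀ x, u x ≠ 0)
    (hw₀ : u x + k * deriv u x ≠ 0) (hu : DifferentiableAt 𝕜 u x) (hχ : DifferentiableAt 𝕜 χ x)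
    (hY : Differentiable 𝕜 Y) (hm : Differentiable 𝕜 m) (hf : Differentiable 𝕜 f)
    (hf' : Differentiable 𝕜 (deriv f))
    (hψx : ∀ x, deriv ψ x = k * ψ x + Λ / u x * χ x)
    (hχx : deriv χ x = Λ / u x * ψ x - k * χ x)
    (hYx : ∀ x, deriv Y x = u x + k * deriv u x) (hmY : m ∘ Y = miura k u) (hfY : f ∘ Y = ψ) :
    deriv (deriv f) (Y x) = -(deriv m (Y x) / m (Y x)) * deriv f (Y x)
      + (m (Y x) - -Λ ^ 2) / m (Y x) ^ 2 * f (Y x) := by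
  have hmx (x : 𝕜) : m (Y x) = u x * (u x + k * deriv u x) := congrFun hmY x
  have hψ : Differentiable 𝕜 ψ := hfY ▸ hf.comp hY
  refine deriv_deriv_eq_of_scaledDeriv_scaledDeriv_eq (hm _) (hf' _) ?_ ?_
  · exact hmx x ▸ mul_ne_zero (hu₀ x) hw₀
  · calc scaledDeriv m (scaledDeriv m f) (Y x)
        = scaledDeriv u (scaledDeriv u ψ) x := by
          rw [← hfY, ← scaledDeriv_scaledDeriv_comp hm hf hf' hY (by simp [hmx, hYx])]
          rfl
      _ = (miura k u x + Λ ^ 2) * ψ x :=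
          scaledDeriv_scaledDeriv_of_rmkdv_lax hk hu₀ hu (hψ x) hχ hψx hχx
      _ = (m (Y x) - -Λ ^ 2) * f (Y x) := by rw [← hmY, ← hfY, sub_neg_eq_add]; rfl

/-- The scalars `Yt`, `ft`, `ψt` are the values of `y_τ`, `Φ_T`, `Ψ_τ`, so that `hψt` is the chain
rule for `Ψ(z, τ) = Φ(y(z, τ), τ)`. -/
theorem rkdv_lax_time_of_rmkdv_lax {Yt ft ψt : 𝕜} (hk : k ^ 2 = 1) (hu₀ : u x ≠ 0)
    (hu : Differentiable 𝕜 u) (hu' : Differentiable 𝕜 (deriv u))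
    (hu'' : DifferentiableAt 𝕜 (deriv (deriv u)) x) (hY : Differentiable 𝕜 Y)
    (hm : Differentiable 𝕜 m) (hm' : Differentiable 𝕜 (deriv m)) (hf : Differentiable 𝕜 f)
    (hψx : deriv ψ x = k * ψ x + Λ / u x * χ x)
    (hYx : ∀ x, deriv Y x = u x + k * deriv u x) (hmY : m ∘ Y = miura k u) (hfY : f ∘ Y = ψ)
    (hYt : Yt = (u x ^ 4 - u x ^ 3 * deriv (deriv u) x)
      + k * deriv (fun x => u x ^ 4 - u x ^ 3 * deriv (deriv u) x) x)
    (hψt : deriv f (Y x) * Yt + ft = ψt)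
    (hlax : ψt = Λ * (-4 * k * Λ * u x * ψ x
      + (u x * deriv (deriv u) x + deriv u x ^ 2 + 2 * k * u x * deriv u x - 4 * Λ ^ 2) * χ x)) :
    ft = (m (Y x) ^ 2 * deriv (deriv m) (Y x) + m (Y x) * deriv m (Y x) ^ 2
        - m (Y x) ^ 2 + 4 * (-Λ ^ 2) * m (Y x)) * deriv f (Y x)
      - m (Y x) * deriv m (Y x) * f (Y x) := by
  have hmu (x : 𝕜) : m (Y x) = u x * deriv Y x := by rw [hYx]; exact congrFun hmY x
  have hmx : miura k u x = m (Y x) := (congrFun hmY x).symm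
  have hψ : ψ x = f (Y x) := (congrFun hfY x).symm
  have hDψ : scaledDeriv u ψ x = m (Y x) * deriv f (Y x) := by
    rw [← hfY, ← scaledDeriv_comp hf hY hmu]; rfl
  have hDm : scaledDeriv u (miura k u) x = m (Y x) * deriv m (Y x) := by
    rw [← hmY, ← scaledDeriv_comp hm hY hmu]; rfl
  have hDDm : scaledDeriv u (scaledDeriv u (miura k u)) x
      = m (Y x) ^ 2 * deriv (deriv m) (Y x) + m (Y x) * deriv m (Y x) ^ 2 := by
    rw [← hmY, ← scaledDeriv_scaledDeriv_comp hm hm hm' hY hmu, Function.comp_apply,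
      scaledDeriv_scaledDeriv (hm _) (hm' _)]
    ring
  rw [reciprocal_flux_eq hk hu hu' hu'', hDDm, hmx] at hYt
  rw [rmkdv_lax_time_eq_scaledDeriv hk hu₀ (hu x) (hu' x) hψx, hDψ, hDm, hψ] at hlax
  linear_combination hψt + hlax - deriv f (Y x) * hYt

end LaxPair

theorem deriv_comp_graph {G : ℝ → ℝ → ℝ} {c : ℝ → ℝ} {t : ℝ}
    (hG : DifferentiableAt ℝ (Function.uncurry G) (c t, t)) (hc : DifferentiableAt ℝ c t) :
    deriv (fun s => G (c s) s) t = d1 G (c t) t * deriv c t + d2 G (c t) t := by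
  have hG' := hG.hasFDerivAt
  have h₁ : d1 G (c t) t = fderiv ℝ (Function.uncurry G) (c t, t) (1, 0) :=
    (hG'.comp_hasDerivAt (f := fun a => (a, t)) (c t)
      ((hasDerivAt_id _).prodMk (hasDerivAt_const _ t))).deriv
  have h₂ : d2 G (c t) t = fderiv ℝ (Function.uncurry G) (c t, t) (0, 1) :=
    (hG'.comp_hasDerivAt (f := fun b => (c t, b)) t
      ((hasDerivAt_const t _).prodMk (hasDerivAt_id t))).deriv
  have hsplit : (deriv c t, (1 : ℝ)) = deriv c t • (1, 0) + (0, 1) := by simp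
  refine (hG'.comp_hasDerivAt (f := fun s => (c s, s)) t
    (hc.hasDerivAt.prodMk (hasDerivAt_id t))).deriv.trans ?_
  rw [hsplit, map_add, map_smul, smul_eq_mul, mul_comm, h₁, h₂]

/-- `ψ` is the component of the eigenvector that is followed and `χ` the other one: the two choices
of component give the same system, up to the sign `k`. -/
theorem RmKdV_eigenvector_satisfies_RKdV_scalar_LaxPair_general
    {U ψ χ y M Φ : ℝ → ℝ → ℝ} {Λ k : ℝ} (hk : k ^ 2 = 1)
    (hU : ContDiff ℝ 3 (Function.uncurry U)) (hχ : Differentiable ℝ (Function.uncurry χ))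
    (hy : Differentiable ℝ (Function.uncurry y)) (hM : ContDiff ℝ 2 (Function.uncurry M))
    (hΦ : ContDiff ℝ 2 (Function.uncurry Φ)) (hU₀ : ∀ z τ, U z τ ≠ 0)
    (hψz : ∀ z τ, d1 ψ z τ = k * ψ z τ + Λ / U z τ * χ z τ)
    (hχz : ∀ z τ, d1 χ z τ = Λ / U z τ * ψ z τ - k * χ z τ)
    (hψτ : ∀ z τ, d2 ψ z τ = Λ * (-4 * k * Λ * U z τ * ψ z τ
      + (U z τ * d1 (d1 U) z τ + d1 U z τ ^ 2 + 2 * k * U z τ * d1 U z τ - 4 * Λ ^ 2) * χ z τ))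
    (hw₀ : ∀ z τ, U z τ + k * d1 U z τ ≠ 0)
    (hyz : ∀ z τ, d1 y z τ = U z τ + k * d1 U z τ)
    (hyτ : ∀ z τ, d2 y z τ = (U z τ ^ 4 - U z τ ^ 3 * d1 (d1 U) z τ)
      + k * d1 (fun a b => U a b ^ 4 - U a b ^ 3 * d1 (d1 U) a b) z τ)
    (hMU : ∀ z τ, M (y z τ) τ = U z τ * (U z τ + k * d1 U z τ))
    (hΦψ : ∀ z τ, Φ (y z τ) τ = ψ z τ) :
    ∀ z τ,
      d1 (d1 Φ) (y z τ) τ =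
          -(d1 M (y z τ) τ / M (y z τ) τ) * d1 Φ (y z τ) τ
            + ((M (y z τ) τ - (-Λ ^ 2)) / (M (y z τ) τ) ^ 2) * Φ (y z τ) τ
      ∧ d2 Φ (y z τ) τ =
          ((M (y z τ) τ) ^ 2 * d1 (d1 M) (y z τ) τ
              + M (y z τ) τ * (d1 M (y z τ) τ) ^ 2
              - (M (y z τ) τ) ^ 2 + 4 * (-Λ ^ 2) * M (y z τ) τ) * d1 Φ (y z τ) τ
            - M (y z τ) τ * d1 M (y z τ) τ * Φ (y z τ) τ := by
  intro z τ
  have hu : ContDiff ℝ 3 (U · τ) := hU.comp₂ contDiff_id contDiff_const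
  have hu₁ : Differentiable ℝ (U · τ) := hu.differentiable (by norm_num)
  have hu₂ : ContDiff ℝ 2 (deriv (U · τ)) := hu.iterate_deriv' 2 1
  have hY : Differentiable ℝ (y · τ) :=
    hy.comp (differentiable_id.prodMk (differentiable_const τ))
  have hYτ : Differentiable ℝ (y z) :=
    hy.comp ((differentiable_const z).prodMk differentiable_id)
  have hm : ContDiff ℝ 2 (M · τ) := hM.comp₂ contDiff_id contDiff_const
  have hf : ContDiff ℝ 2 (Φ · τ) := hΦ.comp₂ contDiff_id contDiff_const
  have hm₁ : Differentiable ℝ (M · τ) := hm.differentiable two_ne_zero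
  have hf₁ : Differentiable ℝ (Φ · τ) := hf.differentiable two_ne_zero
  have hΦ₁ : Differentiable ℝ (Function.uncurry Φ) := hΦ.differentiable two_ne_zero
  have hχ₁ : Differentiable ℝ (χ · τ) :=
    hχ.comp (differentiable_id.prodMk (differentiable_const τ))
  have hmY : (M · τ) ∘ (y · τ) = miura k (U · τ) := funext (hMU · τ)
  have hfY : (Φ · τ) ∘ (y · τ) = (ψ · τ) := funext (hΦψ · τ)
  have hchain : d1 Φ (y z τ) τ * d2 y z τ + d2 Φ (y z τ) τ = d2 ψ z τ :=
    (deriv_comp_graph (hΦ₁ _) (hYτ τ)).symm.trans (congrArg (deriv · τ) (funext (hΦψ z)))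
  constructor
  · exact rkdv_lax_space_of_rmkdv_lax (u := (U · τ)) (ψ := (ψ · τ)) (χ := (χ · τ)) (m := (M · τ))
      (f := (Φ · τ)) (Y := (y · τ)) hk (hU₀ · τ) (hw₀ z τ) (hu₁ z) (hχ₁ z) hY hm₁ hf₁
      hf.differentiable_deriv_two (hψz · τ) (hχz z τ) (hyz · τ) hmY hfY
  · exact rkdv_lax_time_of_rmkdv_lax (u := (U · τ)) (ψ := (ψ · τ)) (χ := (χ · τ)) (m := (M · τ))
      (f := (Φ · τ)) (Y := (y · τ)) hk (hU₀ z τ) hu₁ (hu₂.differentiable two_ne_zero)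
      (hu₂.differentiable_deriv_two z) hY hm₁ hm.differentiable_deriv_two hf₁ (hψz z τ)
      (hyz · τ) hmY hfY (hyτ z τ) hchain (hψτ z τ)

/-- Corollary 1 of the paper: each component `Ψᵢ` of the RmKdV
eigenvector, expressed in the Miura-reciprocal variables (with `k = −1` for `i = 1`
and `k = +1` for `i = 2`), satisfies the scalar RKdV Lax pair with `λ = −Λ²`. -/
theorem RmKdV_eigenvector_satisfies_RKdV_scalar_LaxPair
    (U Ψ₁ Ψ₂ Ψ y M Φ : ℝ → ℝ → ℝ) (Λ k : ℝ)
    (hU : Smooth2 U) (hΨ₁ : Smooth2 Ψ₁) (hΨ₂ : Smooth2 Ψ₂)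
    (hy : Smooth2 y) (hM : Smooth2 M) (hΦ : Smooth2 Φ)
    (hUne : ∀ z τ, U z τ ≠ 0)
    (hRmKdV : ∀ z τ, d2 U z τ
      + d1 (fun z τ => (U z τ) ^ 3 * (d1 (d1 U) z τ - U z τ)) z τ = 0)
    -- RmKdV Lax pair  Ψ_z = B·Ψ,  Ψ_τ = Λ·C·Ψ :
    (hz1 : ∀ z τ, d1 Ψ₁ z τ = -(Ψ₁ z τ) + (Λ / U z τ) * Ψ₂ z τ)
    (hz2 : ∀ z τ, d1 Ψ₂ z τ = (Λ / U z τ) * Ψ₁ z τ + Ψ₂ z τ)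
    (hτ1 : ∀ z τ, d2 Ψ₁ z τ = Λ * (4 * Λ * U z τ * Ψ₁ z τ
      + (U z τ * d1 (d1 U) z τ + (d1 U z τ) ^ 2 - 2 * U z τ * d1 U z τ - 4 * Λ ^ 2)
        * Ψ₂ z τ))
    (hτ2 : ∀ z τ, d2 Ψ₂ z τ = Λ *
      ((U z τ * d1 (d1 U) z τ + (d1 U z τ) ^ 2 + 2 * U z τ * d1 U z τ - 4 * Λ ^ 2)
        * Ψ₁ z τ - 4 * Λ * U z τ * Ψ₂ z τ))
    -- choice of component: k = −1 for Ψ₁, k = +1 for Ψ₂ :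
    (hik : (k = -1 ∧ Ψ = Ψ₁) ∨ (k = 1 ∧ Ψ = Ψ₂))
    (hUkne : ∀ z τ, U z τ + k * d1 U z τ ≠ 0)
    -- Miura-reciprocal transformation :
    (hyz : ∀ z τ, d1 y z τ = U z τ + k * d1 U z τ)
    (hyτ : ∀ z τ, d2 y z τ =
      ((U z τ) ^ 4 - (U z τ) ^ 3 * d1 (d1 U) z τ)
        + k * d1 (fun a b => (U a b) ^ 4 - (U a b) ^ 3 * d1 (d1 U) a b) z τ)
    (hMU : ∀ z τ, M (y z τ) τ = U z τ * (U z τ + k * d1 U z τ))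
    (hΦΨ : ∀ z τ, Φ (y z τ) τ = Ψ z τ) :
    ∀ z τ,
      d1 (d1 Φ) (y z τ) τ =
          -(d1 M (y z τ) τ / M (y z τ) τ) * d1 Φ (y z τ) τ
            + ((M (y z τ) τ - (-Λ ^ 2)) / (M (y z τ) τ) ^ 2) * Φ (y z τ) τ
      ∧ d2 Φ (y z τ) τ =
          ((M (y z τ) τ) ^ 2 * d1 (d1 M) (y z τ) τ
              + M (y z τ) τ * (d1 M (y z τ) τ) ^ 2
              - (M (y z τ) τ) ^ 2 + 4 * (-Λ ^ 2) * M (y z τ) τ) * d1 Φ (y z τ) τ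
            - M (y z τ) τ * d1 M (y z τ) τ * Φ (y z τ) τ := by
  have hU₃ : ContDiff ℝ 3 (Function.uncurry U) := contDiff_infty.1 hU 3
  have hy₁ : Differentiable ℝ (Function.uncurry y) := hy.differentiable (by simp)
  have hM₂ : ContDiff ℝ 2 (Function.uncurry M) := contDiff_infty.1 hM 2
  have hΦ₂ : ContDiff ℝ 2 (Function.uncurry Φ) := contDiff_infty.1 hΦ 2
  rcases hik with ⟨rfl, rfl⟩ | ⟨rfl, rfl⟩
  · exact RmKdV_eigenvector_satisfies_RKdV_scalar_LaxPair_general (by norm_num) hU₃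
      (hΨ₂.differentiable (by simp)) hy₁ hM₂ hΦ₂ hUne (fun z τ => by rw [hz1]; ring)
      (fun z τ => by rw [hz2]; ring) (fun z τ => by rw [hτ1]; ring) hUkne hyz hyτ hMU hΦΨ
  · exact RmKdV_eigenvector_satisfies_RKdV_scalar_LaxPair_general (by norm_num) hU₃
      (hΨ₁.differentiable (by simp)) hy₁ hM₂ hΦ₂ hUne (fun z τ => by rw [hz2]; ring)
      (fun z τ => by rw [hz1]; ring) (fun z τ => by rw [hτ2]; ring) hUkne hyz hyτ hMU hΦΨ
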